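/- Let W ⊆ GL(n, ℂ) be a finite subgroup generated by pseudo-reflections (elements of finite order whose fixed subspace has dimension n − 1), acting on the polynomial ring ℂ[x₁,…,x_n] by linear substitution of variables, (w·p)(v) = p(w⁻¹v). Then there exist n algebraically independent homogeneous polynomials σ₁,…,σ_n ∈ ℂ[x₁,…,x_n] such that the invariant ring ℂ[x₁,…,x_n]^W is exactly the ℂ-subalgebra generated by σ₁,…,σ_n. (This is the structure R• = (Sym• 𝔱*)^W ≅ ℂ[σ₁,…,σ_l] of the ring of Weyl-group invariants underlying the Hitchin base B = ⊕ᵢ H⁰(Sym^{dᵢ} K).) -/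

import Mathlib

/-!
STATEMENT 10 (Chevalley–Shephard–Todd, existence of basic invariants): If
W ⊆ GL(n, ℂ) is a finite subgroup generated by pseudo-reflections, acting on
ℂ[x₁,…,x_n] by (w·p)(v) = p(w⁻¹ v), then there are n algebraically independent
homogeneous polynomials σ₁,…,σ_n with ℂ[x₁,…,x_n]^W = ℂ[σ₁,…,σ_n].
-/

open Module

/-- The action of `g ∈ GL(n, ℂ)` on polynomials by linear substitution of variables:
`(g · p)(v) = p(g⁻¹ v)`, i.e. `x_i ↦ ∑_j (g⁻¹)_{ij} x_j`. -/
noncomputable def polySubst (n : ℕ) (g : GL (Fin n) ℂ)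
    (p : MvPolynomial (Fin n) ℂ) : MvPolynomial (Fin n) ℂ :=
  MvPolynomial.aeval
    (fun i => ∑ j, MvPolynomial.C (((g⁻¹ : GL (Fin n) ℂ) : Matrix (Fin n) (Fin n) ℂ) i j)
      * MvPolynomial.X j) p

/-- A pseudo-reflection: an element of `GL(n, ℂ)` of finite order whose fixed
subspace `{v : g v = v}` has dimension `n − 1`. -/
noncomputable def IsPseudoReflection (n : ℕ) (g : GL (Fin n) ℂ) : Prop :=
  IsOfFinOrder g ∧
  finrank ℂ (LinearMap.ker
      (Matrix.toLin' ((g : Matrix (Fin n) (Fin n) ℂ)) - LinearMap.id)) = n - 1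

section cst

open MvPolynomial

/-- Component of a product with a homogeneous factor. -/
lemma cst_comp_mul {n : ℕ} {f : MvPolynomial (Fin n) ℂ} {a : ℕ} (hf : f.IsHomogeneous a)
    (q : MvPolynomial (Fin n) ℂ) (d : ℕ) :
    homogeneousComponent d (f * q) =
      if a ≤ d then f * homogeneousComponent (d - a) q else 0 := by
  have h1 : f * q = ∑ i ∈ Finset.range (q.totalDegree + 1), f * homogeneousComponent i q := by
    rw [← Finset.mul_sum, sum_homogeneousComponent]
  have h2 : ∀ i, homogeneousComponent d (f * homogeneousComponent i q) =
      if a + i = d then f * homogeneousComponent i q else 0 := by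
    intro i
    rw [homogeneousComponent_of_mem (hf.mul (homogeneousComponent_isHomogeneous i q))]
    simp only [eq_comm]
  rw [h1, map_sum]
  simp only [h2]
  split_ifs with had
  · by_cases hq : d - a < q.totalDegree + 1
    · rw [Finset.sum_eq_single (d - a)]
      · rw [if_pos (by omega)]
      · intro b _ hb
        rw [if_neg (by omega)]
      · intro h
        exact absurd (Finset.mem_range.2 hq) h
    · rw [homogeneousComponent_eq_zero _ _ (by omega), mul_zero]
      apply Finset.sum_eq_zero
      intro i hi
      rw [Finset.mem_range] at hi
      rw [if_neg (by omega)]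
  · apply Finset.sum_eq_zero
    intro i hi
    rw [if_neg (by omega)]

/-- Spans (over a graded subalgebra) of homogeneous elements are graded. -/
lemma cst_comp_span {n : ℕ} (A : Subalgebra ℂ (MvPolynomial (Fin n) ℂ))
    (hA : ∀ p ∈ A, ∀ d, homogeneousComponent d p ∈ A)
    (F : Set (MvPolynomial (Fin n) ℂ)) (hF : ∀ f ∈ F, ∃ a, f.IsHomogeneous a)
    (u : MvPolynomial (Fin n) ℂ) (hu : u ∈ Submodule.span A F) (d : ℕ) :
    homogeneousComponent d u ∈ Submodule.span A F := by
  induction hu using Submodule.span_induction generalizing d with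
  | mem x hx =>
    obtain ⟨a, ha⟩ := hF x hx
    rw [homogeneousComponent_of_mem ha]
    split_ifs
    · exact Submodule.subset_span hx
    · exact zero_mem _
  | zero => simp
  | add x y _ _ hx hy => rw [map_add]; exact add_mem (hx d) (hy d)
  | smul r x hx ih =>
    have h0 : r • x = (r : MvPolynomial (Fin n) ℂ) * x := rfl
    have h1 : r • x = ∑ i ∈ Finset.range ((r : MvPolynomial (Fin n) ℂ).totalDegree + 1),
        homogeneousComponent i (r : MvPolynomial (Fin n) ℂ) * x := by
      rw [← Finset.sum_mul, sum_homogeneousComponent, h0]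
    rw [h1, map_sum]
    refine sum_mem fun i _ => ?_
    rw [cst_comp_mul (homogeneousComponent_isHomogeneous i _)]
    split_ifs
    · exact Submodule.smul_mem _ (⟨_, hA _ r.2 i⟩ : A) (ih _)
    · exact zero_mem _

/-- If `f * (c + q)` is in the span, with `f` homogeneous, `c ≠ 0`, then so is `f`. -/
lemma cst_cancel {n : ℕ} (A : Subalgebra ℂ (MvPolynomial (Fin n) ℂ))
    (hA : ∀ p ∈ A, ∀ d, homogeneousComponent d p ∈ A)
    (F : Set (MvPolynomial (Fin n) ℂ)) (hF : ∀ f ∈ F, ∃ a, f.IsHomogeneous a)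
    (f q : MvPolynomial (Fin n) ℂ) (a : ℕ) (hf : f.IsHomogeneous a)
    (hq : constantCoeff q ≠ 0) (hu : f * q ∈ Submodule.span A F) :
    f ∈ Submodule.span A F := by
  have h := cst_comp_span A hA F hF _ hu a
  rw [cst_comp_mul hf, if_pos le_rfl, Nat.sub_self, homogeneousComponent_zero] at h
  have h2 := Submodule.smul_mem _ (algebraMap ℂ A (constantCoeff q)⁻¹) h
  have h3 : (algebraMap ℂ A (constantCoeff q)⁻¹) • (f * C (coeff 0 q)) = f := by
    change C (constantCoeff q)⁻¹ * (f * C (coeff 0 q)) = f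
    rw [mul_left_comm, ← C_mul, ← constantCoeff_eq, inv_mul_cancel₀ hq, C_1, mul_one]
  rwa [h3] at h2

/-- Chain rule. -/
lemma cst_chain {n : ℕ} {ι : Type} [Fintype ι] (f : ι → MvPolynomial (Fin n) ℂ)
    (H : MvPolynomial ι ℂ) (k : Fin n) :
    pderiv k (aeval f H) = ∑ i, aeval f (pderiv i H) * pderiv k (f i) := by
  classical
  induction H using MvPolynomial.induction_on with
  | C a => simp [algebraMap_eq]
  | add p q hp hq => simp only [map_add, hp, hq, add_mul, Finset.sum_add_distrib]
  | mul_X p j hp =>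
    simp only [map_mul, aeval_X, Derivation.leibniz, smul_eq_mul, hp, map_add, add_mul,
      Finset.sum_add_distrib, pderiv_X]
    rw [Finset.mul_sum]
    congr 1
    · rw [Finset.sum_eq_single j]
      · simp
      · intro b _ hb
        simp [Ne.symm hb]
      · simp
    · exact Finset.sum_congr rfl fun i _ => by ring

lemma cst_span_top {n : ℕ} (F : Set (MvPolynomial (Fin n) ℂ)) (u : MvPolynomial (Fin n) ℂ) :
    u ∈ Submodule.span (⊤ : Subalgebra ℂ (MvPolynomial (Fin n) ℂ)) F ↔ u ∈ Ideal.span F := by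
  constructor
  · intro hu
    induction hu using Submodule.span_induction with
    | mem x hx => exact Ideal.subset_span hx
    | zero => exact zero_mem _
    | add x y _ _ hx hy => exact add_mem hx hy
    | smul r x _ ih => exact Ideal.mul_mem_left _ (r : MvPolynomial (Fin n) ℂ) ih
  · intro hu
    induction hu using Submodule.span_induction with
    | mem x hx => exact Submodule.subset_span hx
    | zero => exact zero_mem _
    | add x y _ _ hx hy => exact add_mem hx hy
    | smul r x _ ih =>
      exact Submodule.smul_mem _
        (⟨r, Algebra.mem_top⟩ : (⊤ : Subalgebra ℂ (MvPolynomial (Fin n) ℂ))) ih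

section action

variable {n : ℕ} {G : Type} [Group G] [Fintype G] [MulSemiringAction G (MvPolynomial (Fin n) ℂ)]
  [SMulCommClass G ℂ (MvPolynomial (Fin n) ℂ)]

/-- The set of homogeneous invariants of positive degree. -/
def cstF (n : ℕ) (G : Type) [Group G] [MulSemiringAction G (MvPolynomial (Fin n) ℂ)] :
    Set (MvPolynomial (Fin n) ℂ) :=
  {p | (∀ g : G, g • p = p) ∧ ∃ d, 0 < d ∧ p.IsHomogeneous d}

lemma cst_comp_smul
    (hom : ∀ (g : G) (d : ℕ) (p : MvPolynomial (Fin n) ℂ), p.IsHomogeneous d →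
      (g • p).IsHomogeneous d) (g : G) (p : MvPolynomial (Fin n) ℂ) (d : ℕ) :
    homogeneousComponent d (g • p) = g • homogeneousComponent d p := by
  have h1 : g • p = ∑ i ∈ Finset.range (p.totalDegree + 1), g • homogeneousComponent i p := by
    rw [← Finset.smul_sum, sum_homogeneousComponent]
  rw [h1, map_sum]
  have h2 : ∀ i, homogeneousComponent d (g • homogeneousComponent i p) =
      if d = i then g • homogeneousComponent i p else 0 := fun i =>
    homogeneousComponent_of_mem (hom g i _ (homogeneousComponent_isHomogeneous i p))
  simp only [h2]
  rw [Finset.sum_ite_eq]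
  split_ifs with h
  · rfl
  · rw [homogeneousComponent_eq_zero, smul_zero]
    simpa using h

lemma cst_comp_inv
    (hom : ∀ (g : G) (d : ℕ) (p : MvPolynomial (Fin n) ℂ), p.IsHomogeneous d →
      (g • p).IsHomogeneous d) :
    ∀ p ∈ FixedPoints.subalgebra ℂ (MvPolynomial (Fin n) ℂ) G, ∀ d,
      homogeneousComponent d p ∈ FixedPoints.subalgebra ℂ (MvPolynomial (Fin n) ℂ) G := by
  intro p hp d g
  rw [← cst_comp_smul hom, hp g]

/-- The Reynolds operator. -/
noncomputable def cstRe (G : Type) [Group G] [Fintype G]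
    [MulSemiringAction G (MvPolynomial (Fin n) ℂ)]
    (p : MvPolynomial (Fin n) ℂ) : MvPolynomial (Fin n) ℂ :=
  C ((Fintype.card G : ℂ)⁻¹) * ∑ g : G, g • p

lemma cst_smul_C (g : G) (c : ℂ) :
    g • (C c : MvPolynomial (Fin n) ℂ) = C c := by
  rw [C_eq_smul_one, smul_comm, smul_one]

lemma cstRe_inv (p : MvPolynomial (Fin n) ℂ) (g : G) : g • cstRe G p = cstRe G p := by
  unfold cstRe
  rw [smul_mul', cst_smul_C, Finset.smul_sum]
  congr 1
  simp only [smul_smul]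
  exact Fintype.sum_equiv (Equiv.mulLeft g) _ _ (fun x => rfl)

lemma cstRe_mul (f p : MvPolynomial (Fin n) ℂ) (hf : ∀ g : G, g • f = f) :
    cstRe G (f * p) = f * cstRe G p := by
  unfold cstRe
  simp only [smul_mul', hf, ← Finset.mul_sum]
  ring

lemma cstRe_sub (p q : MvPolynomial (Fin n) ℂ) :
    cstRe G p - q = C ((Fintype.card G : ℂ)⁻¹) * ∑ g : G, (g • p - q) := by
  unfold cstRe
  rw [Finset.sum_sub_distrib, mul_sub]
  congr 1
  rw [Finset.sum_const, Finset.card_univ, nsmul_eq_mul, ← mul_assoc, ← map_natCast C, ← C_mul,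
    inv_mul_cancel₀, C_1, one_mul]
  exact Nat.cast_ne_zero.2 Fintype.card_ne_zero

lemma cstRe_self (p : MvPolynomial (Fin n) ℂ) (hf : ∀ g : G, g • p = p) :
    cstRe G p = p := by
  rw [← sub_eq_zero, cstRe_sub]
  simp [hf]

lemma cstRe_sum {ι : Type} (s : Finset ι) (p : ι → MvPolynomial (Fin n) ℂ) :
    cstRe G (∑ i ∈ s, p i) = ∑ i ∈ s, cstRe G (p i) := by
  unfold cstRe
  simp only [Finset.smul_sum]
  rw [Finset.sum_comm, Finset.mul_sum]

lemma cst_ideal_smul (g : G) (p : MvPolynomial (Fin n) ℂ) (hp : p ∈ Ideal.span (cstF n G)) :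
    g • p ∈ Ideal.span (cstF n G) := by
  induction hp using Submodule.span_induction with
  | mem x hx => rw [hx.1 g]; exact Ideal.subset_span hx
  | zero => rw [smul_zero]; exact zero_mem _
  | add x y _ _ hx hy => rw [smul_add]; exact add_mem hx hy
  | smul r x _ ih =>
    rw [smul_eq_mul, smul_mul']
    exact Ideal.mul_mem_left _ _ ih

/-- Invariants with zero constant term lie in the Hilbert ideal. -/
lemma cst_inv_mem
    (hom : ∀ (g : G) (d : ℕ) (p : MvPolynomial (Fin n) ℂ), p.IsHomogeneous d →
      (g • p).IsHomogeneous d)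
    (p : MvPolynomial (Fin n) ℂ) (hp : ∀ g : G, g • p = p) (h0 : constantCoeff p = 0) :
    p ∈ Ideal.span (cstF n G) := by
  rw [← sum_homogeneousComponent p]
  refine sum_mem fun i _ => ?_
  rcases Nat.eq_zero_or_pos i with rfl | hi
  · rw [homogeneousComponent_zero, ← constantCoeff_eq, h0, C_0]
    exact zero_mem _
  · exact Ideal.subset_span ⟨cst_comp_inv hom p hp i, i, hi, homogeneousComponent_isHomogeneous i p⟩

/-- Chevalley's key lemma. -/
lemma cst_key
    (hom : ∀ (g : G) (d : ℕ) (p : MvPolynomial (Fin n) ℂ), p.IsHomogeneous d →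
      (g • p).IsHomogeneous d)
    (hgen : Subgroup.closure {s : G | ∃ L : MvPolynomial (Fin n) ℂ, L.IsHomogeneous 1 ∧
      ∀ p : MvPolynomial (Fin n) ℂ, L ∣ s • p - p} = ⊤)
    {ι : Type} [DecidableEq ι] (T : Finset ι) (i0 : ι) (hi0 : i0 ∈ T)
    (f : ι → MvPolynomial (Fin n) ℂ) (hf : ∀ i, ∀ g : G, g • f i = f i)
    (hfh : ∀ i, ∃ a, (f i).IsHomogeneous a)
    (hni : f i0 ∉ Submodule.span (FixedPoints.subalgebra ℂ (MvPolynomial (Fin n) ℂ) G)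
      (f '' (T.erase i0 : Finset ι))) (N : ℕ) :
    ∀ q : ι → MvPolynomial (Fin n) ℂ, (q i0).totalDegree < N → ∑ i ∈ T, f i * q i = 0 →
      q i0 ∈ Ideal.span (cstF n G) := by
  induction N with
  | zero => intro q hq; omega
  | succ N ih =>
    intro q hq hsum
    -- the reflections act trivially modulo the ideal
    have hrefl : ∀ g : G, g • q i0 - q i0 ∈ Ideal.span (cstF n G) := by
      intro g
      have hg : g ∈ Subgroup.closure {s : G | ∃ L : MvPolynomial (Fin n) ℂ, L.IsHomogeneous 1 ∧
        ∀ p : MvPolynomial (Fin n) ℂ, L ∣ s • p - p} := by rw [hgen]; trivial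
      induction hg using Subgroup.closure_induction with
      | mem s hs =>
        obtain ⟨L, hL, hdiv⟩ := hs
        choose r hr using fun i => hdiv (q i)
        by_cases hL0 : L = 0
        · rw [hr, hL0, zero_mul]; exact zero_mem _
        rw [hr]
        by_cases hr0 : r i0 = 0
        · rw [hr0, mul_zero]; exact zero_mem _
        refine Ideal.mul_mem_left _ _ (ih r ?_ ?_)
        · have h1 : (s • q i0).totalDegree ≤ (q i0).totalDegree := by
            conv_lhs => rw [← sum_homogeneousComponent (q i0), Finset.smul_sum]
            refine totalDegree_finsetSum_le fun i hi => ?_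
            refine (hom s i _ (homogeneousComponent_isHomogeneous i _)).totalDegree_le.trans ?_
            rw [Finset.mem_range] at hi; omega
          have h2 : (L * r i0).totalDegree ≤ (q i0).totalDegree := by
            rw [← hr]
            exact (totalDegree_sub _ _).trans (max_le h1 le_rfl)
          rw [totalDegree_mul_of_isDomain hL0 hr0, hL.totalDegree hL0] at h2
          omega
        · have h3 : L * ∑ i ∈ T, f i * r i = 0 := by
            have h4 : L * ∑ i ∈ T, f i * r i = ∑ i ∈ T, (s • (f i * q i) - f i * q i) := by
              rw [Finset.mul_sum]
              refine Finset.sum_congr rfl fun i _ => ?_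
              rw [smul_mul', hf, ← mul_sub, hr]
              ring
            rw [h4, Finset.sum_sub_distrib, ← Finset.smul_sum, hsum, smul_zero, sub_zero]
          exact (mul_eq_zero.1 h3).resolve_left hL0
      | one => rw [one_smul, sub_self]; exact zero_mem _
      | mul x y _ _ hx hy =>
        have : (x * y) • q i0 - q i0 = x • (y • q i0 - q i0) + (x • q i0 - q i0) := by
          rw [smul_sub, mul_smul]; ring
        rw [this]
        exact add_mem (cst_ideal_smul _ _ hy) hx
      | inv x _ hx =>
        have : x⁻¹ • q i0 - q i0 = - (x⁻¹ • (x • q i0 - q i0)) := by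
          rw [smul_sub, inv_smul_smul]; ring
        rw [this]
        exact neg_mem (cst_ideal_smul _ _ hx)
    have hRe : cstRe G (q i0) - q i0 ∈ Ideal.span (cstF n G) := by
      rw [cstRe_sub]
      exact Ideal.mul_mem_left _ _ (sum_mem fun g _ => hrefl g)
    have hc : constantCoeff (cstRe G (q i0)) = 0 := by
      by_contra hc
      apply hni
      obtain ⟨a, ha⟩ := hfh i0
      refine cst_cancel _ (cst_comp_inv hom) _ ?_ (f i0) (cstRe G (q i0)) a ha hc ?_
      · rintro _ ⟨i, _, rfl⟩
        exact hfh i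
      · have h5 : ∑ i ∈ T, f i * cstRe G (q i) = 0 := by
          have h6 : cstRe G (∑ i ∈ T, f i * q i) = 0 := by rw [hsum]; simp [cstRe]
          rw [cstRe_sum] at h6
          rw [← h6]
          exact Finset.sum_congr rfl fun i _ => (cstRe_mul _ _ (hf i)).symm
        rw [← Finset.add_sum_erase _ _ hi0] at h5
        rw [eq_neg_of_add_eq_zero_left h5]
        refine neg_mem (sum_mem fun i hi => ?_)
        rw [mul_comm]
        exact Submodule.smul_mem _
          (⟨cstRe G (q i), cstRe_inv (q i)⟩ :
            FixedPoints.subalgebra ℂ (MvPolynomial (Fin n) ℂ) G)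
          (Submodule.subset_span ⟨i, hi, rfl⟩)
    have := sub_mem (cst_inv_mem hom _ (cstRe_inv (q i0)) hc) hRe
    rwa [sub_sub_cancel] at this

/-- Weighted-homogeneous relations vanish. -/
lemma cst_rel
    (hom : ∀ (g : G) (d : ℕ) (p : MvPolynomial (Fin n) ℂ), p.IsHomogeneous d →
      (g • p).IsHomogeneous d)
    (hgen : Subgroup.closure {s : G | ∃ L : MvPolynomial (Fin n) ℂ, L.IsHomogeneous 1 ∧
      ∀ p : MvPolynomial (Fin n) ℂ, L ∣ s • p - p} = ⊤)
    {ι : Type} [DecidableEq ι] [Fintype ι]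
    (f : ι → MvPolynomial (Fin n) ℂ) (d : ι → ℕ) (hd : ∀ i, 0 < d i)
    (hf : ∀ i, ∀ g : G, g • f i = f i)
    (hfh : ∀ i, (f i).IsHomogeneous (d i))
    (hI : Ideal.span (cstF n G) = Ideal.span (Set.range f))
    (hmin : ∀ i, f i ∉ Ideal.span (f '' {i}ᶜ)) (e : ℕ) :
    ∀ H : MvPolynomial ι ℂ, IsWeightedHomogeneous d H e → aeval f H = 0 → H = 0 := by
  induction e using Nat.strong_induction_on with
  | _ e ih =>
  intro H hH hrel
  have hpd : ∀ i, d i ≤ e → IsWeightedHomogeneous d (pderiv i H) (e - d i) := fun i hi =>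
    hH.pderiv (by omega)
  have hpd0 : ∀ i, ¬ d i ≤ e → pderiv i H = 0 := by
    intro i hi
    apply pderiv_eq_zero_of_notMem_vars
    intro hv
    obtain ⟨m, hm, him⟩ := (mem_vars_iff_mem_support i).1 hv
    have h1 := hH (mem_support_iff.1 hm)
    have h3 : m i ≠ 0 := Finsupp.mem_support_iff.1 him
    have := Finsupp.le_weight_of_ne_zero' d h3
    omega
  by_cases hall : ∀ i, aeval f (pderiv i H) = 0
  · have hz : ∀ i, pderiv i H = 0 := by
      intro i
      by_cases hi : d i ≤ e
      · exact ih (e - d i) (by have := hd i; omega) _ (hpd i hi) (hall i)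
      · exact hpd0 i hi
    rcases Nat.eq_zero_or_pos e with rfl | he
    · have hC : H = C (coeff 0 H) := by
        ext m
        rw [coeff_C]
        split_ifs with hm
        · rw [hm]
        · by_contra hne
          have h1 := hH hne
          obtain ⟨i, hi⟩ := Finsupp.ne_iff.1 (Ne.symm hm)
          have := Finsupp.le_weight_of_ne_zero' d hi
          have := hd i
          omega
      rw [hC, aeval_C, algebraMap_eq, C_eq_zero] at hrel
      rw [hC, hrel, C_0]
    · have h1 := hH.sum_weight_X_mul_pderiv
      simp only [hz, mul_zero, smul_zero, Finset.sum_const_zero] at h1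
      rw [eq_comm, smul_eq_zero] at h1
      exact h1.resolve_left he.ne'
  exfalso
  let h : ι → MvPolynomial (Fin n) ℂ := fun i => aeval f (pderiv i H)
  have hhinv : ∀ i, ∀ g : G, g • h i = h i := by
    intro i
    have : h i ∈ FixedPoints.subalgebra ℂ (MvPolynomial (Fin n) ℂ) G := by
      have h1 : h i ∈ Algebra.adjoin ℂ (Set.range f) := by
        rw [Algebra.adjoin_range_eq_range_aeval]
        exact ⟨_, rfl⟩
      refine Algebra.adjoin_le ?_ h1
      rintro _ ⟨j, rfl⟩
      exact hf j
    exact this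
  have hhh : ∀ i, ∃ a, (h i).IsHomogeneous a := by
    intro i
    by_cases hi : d i ≤ e
    · refine ⟨e - d i, ?_⟩
      have h1 := hpd i hi
      change (aeval f (pderiv i H)).IsHomogeneous _
      rw [aeval_def, eval₂_eq]
      refine IsHomogeneous.sum _ _ _ fun m hm => ?_
      have h2 := h1 (mem_support_iff.1 hm)
      rw [← zero_add (e - d i), ← h2]
      refine IsHomogeneous.mul (isHomogeneous_C _ _) ?_
      rw [Finsupp.weight_apply, Finsupp.sum]
      refine IsHomogeneous.prod _ _ _ fun j _ => ?_
      rw [smul_eq_mul, mul_comm]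
      exact (hfh j).pow _
    · refine ⟨0, ?_⟩
      simp only [h, hpd0 i hi, map_zero]
      exact isHomogeneous_zero _ _ _
  let A := FixedPoints.subalgebra ℂ (MvPolynomial (Fin n) ℂ) G
  -- minimal generating subset
  have hex : ∃ k, ∃ T : Finset ι, T.card = k ∧
      ∀ j, h j ∈ Submodule.span A (h '' (T : Set ι)) :=
    ⟨_, Finset.univ, rfl, fun j => Submodule.subset_span ⟨j, by simp, rfl⟩⟩
  classical
  obtain ⟨T, hTc, hT⟩ := Nat.find_spec hex
  have hTmin : ∀ i ∈ T, h i ∉ Submodule.span A (h '' ((T.erase i : Finset ι) : Set ι)) := by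
    intro i hi hmem
    refine Nat.find_min hex (m := (T.erase i).card) ?_ ⟨T.erase i, rfl, fun j => ?_⟩
    · rw [← hTc]; exact Finset.card_erase_lt_of_mem hi
    · refine Submodule.span_le.2 ?_ (hT j)
      rintro _ ⟨l, hl, rfl⟩
      by_cases hli : l = i
      · rw [hli]; exact hmem
      · exact Submodule.subset_span ⟨l, by simpa [hli] using hl, rfl⟩
  have hTne : T.Nonempty := by
    rw [Finset.nonempty_iff_ne_empty]
    rintro rfl
    apply hall
    intro i
    have h1 := hT i
    rw [Finset.coe_empty, Set.image_empty, Submodule.span_empty, Submodule.mem_bot] at h1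
    exact h1
  obtain ⟨i0, hi0⟩ := hTne
  have hG : ∀ j, ∃ c : ι → A, ∑ i ∈ T, c i • h i = h j := by
    intro j
    obtain ⟨c, hc⟩ := (Submodule.mem_span_image_finset_iff_exists_fun A).1 (hT j)
    refine ⟨fun i => if hi : i ∈ T then c ⟨i, hi⟩ else 0, ?_⟩
    rw [← hc, ← Finset.sum_coe_sort T]
    refine Finset.sum_congr rfl fun i _ => ?_
    simp
  choose c hc using hG
  -- apply the key lemma
  have hk : ∀ k, pderiv k (f i0) + ∑ j ∈ Tᶜ, (c j i0 : MvPolynomial (Fin n) ℂ) * pderiv k (f j) ∈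
      Ideal.span (cstF n G) := by
    intro k
    refine cst_key hom hgen T i0 hi0 h hhinv hhh (hTmin i0 hi0) _
      (fun i => pderiv k (f i) + ∑ j ∈ Tᶜ, (c j i : MvPolynomial (Fin n) ℂ) * pderiv k (f j))
      (Nat.lt_succ_self _) ?_
    have h1 := cst_chain f H k
    rw [hrel, map_zero, ← Finset.sum_add_sum_compl T] at h1
    rw [h1]
    simp only [mul_add, Finset.sum_add_distrib]
    congr 1
    simp only [Finset.mul_sum]
    rw [Finset.sum_comm]
    refine Finset.sum_congr rfl fun j _ => ?_
    change _ = h j * _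
    rw [← hc j, Finset.sum_mul]
    refine Finset.sum_congr rfl fun i _ => ?_
    change _ = ((c j i : MvPolynomial (Fin n) ℂ) * h i) * _
    ring
  have hq : ∀ k, ∃ q : ι → MvPolynomial (Fin n) ℂ, ∑ i, q i * f i =
      pderiv k (f i0) + ∑ j ∈ Tᶜ, (c j i0 : MvPolynomial (Fin n) ℂ) * pderiv k (f j) := by
    intro k
    have := hk k
    rw [hI] at this
    exact (Ideal.mem_span_range_iff_exists_fun).1 this
  choose q hq using hq
  have heul : (d i0 : MvPolynomial (Fin n) ℂ) * f i0 +
      ∑ j ∈ Tᶜ, (c j i0 : MvPolynomial (Fin n) ℂ) * ((d j : MvPolynomial (Fin n) ℂ) * f j) =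
      ∑ i, (∑ k, X k * q k i) * f i := by
    have h1 : ∀ j, (d j : MvPolynomial (Fin n) ℂ) * f j = ∑ k, X k * pderiv k (f j) := by
      intro j
      rw [(hfh j).sum_X_mul_pderiv, nsmul_eq_mul]
    simp only [h1, Finset.sum_mul, Finset.mul_sum]
    rw [Finset.sum_comm (s := Tᶜ), Finset.sum_comm (s := (Finset.univ : Finset ι)),
      ← Finset.sum_add_distrib]
    refine Finset.sum_congr rfl fun k _ => ?_
    simp only [mul_assoc]
    rw [← Finset.mul_sum, hq k, mul_add, Finset.mul_sum]
    congr 1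
    refine Finset.sum_congr rfl fun j _ => ?_
    ring
  apply hmin i0
  rw [← cst_span_top]
  refine cst_cancel ⊤ (fun _ _ _ => Algebra.mem_top) _ ?_ (f i0)
    ((d i0 : MvPolynomial (Fin n) ℂ) - ∑ k, X k * q k i0) (d i0) (hfh i0) ?_ ?_
  · rintro _ ⟨i, _, rfl⟩
    exact ⟨_, hfh i⟩
  · have := (hd i0).ne'
    simpa using this
  · rw [cst_span_top]
    rw [← Finset.add_sum_erase _ _ (Finset.mem_univ i0)] at heul
    have h2 : f i0 * ((d i0 : MvPolynomial (Fin n) ℂ) - ∑ k, X k * q k i0) =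
        ∑ x ∈ Finset.univ.erase i0, (∑ k, X k * q k x) * f x -
        ∑ j ∈ Tᶜ, (c j i0 : MvPolynomial (Fin n) ℂ) * ((d j : MvPolynomial (Fin n) ℂ) * f j) := by
      linear_combination heul
    rw [h2]
    refine sub_mem (sum_mem fun i hi => ?_) (sum_mem fun j hj => ?_)
    · exact Ideal.mul_mem_left _ _ (Ideal.subset_span ⟨i, by simpa using hi, rfl⟩)
    · refine Ideal.mul_mem_left _ _ (Ideal.mul_mem_left _ _ (Ideal.subset_span ⟨j, ?_, rfl⟩))
      rintro rfl
      exact (Finset.mem_compl.1 hj) hi0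

lemma cst_indep
    (hom : ∀ (g : G) (d : ℕ) (p : MvPolynomial (Fin n) ℂ), p.IsHomogeneous d →
      (g • p).IsHomogeneous d)
    (hgen : Subgroup.closure {s : G | ∃ L : MvPolynomial (Fin n) ℂ, L.IsHomogeneous 1 ∧
      ∀ p : MvPolynomial (Fin n) ℂ, L ∣ s • p - p} = ⊤)
    {ι : Type} [Fintype ι]
    (f : ι → MvPolynomial (Fin n) ℂ) (d : ι → ℕ) (hd : ∀ i, 0 < d i)
    (hf : ∀ i, ∀ g : G, g • f i = f i)
    (hfh : ∀ i, (f i).IsHomogeneous (d i))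
    (hI : Ideal.span (cstF n G) = Ideal.span (Set.range f))
    (hmin : ∀ i, f i ∉ Ideal.span (f '' {i}ᶜ)) : AlgebraicIndependent ℂ f := by
  classical
  rw [algebraicIndependent_iff]
  intro H hH
  have hfin := weightedHomogeneousComponent_finsupp (w := d) H
  have hwh : ∀ e, (aeval f (weightedHomogeneousComponent d e H)).IsHomogeneous e := by
    intro e
    have h1 := weightedHomogeneousComponent_isWeightedHomogeneous (w := d) e H
    rw [aeval_def, eval₂_eq]
    refine IsHomogeneous.sum _ _ _ fun m hm => ?_
    have h2 := h1 (mem_support_iff.1 hm)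
    rw [← zero_add e, ← h2]
    refine IsHomogeneous.mul (isHomogeneous_C _ _) ?_
    rw [Finsupp.weight_apply, Finsupp.sum]
    refine IsHomogeneous.prod _ _ _ fun j _ => ?_
    rw [smul_eq_mul, mul_comm]
    exact (hfh j).pow _
  have hzero : ∀ e, weightedHomogeneousComponent d e H = 0 := by
    intro e
    refine cst_rel hom hgen f d hd hf hfh hI hmin e _
      (weightedHomogeneousComponent_isWeightedHomogeneous e H) ?_
    have h3 : homogeneousComponent e (aeval f H) = 0 := by rw [hH, map_zero]
    rw [← sum_weightedHomogeneousComponent d H, finsum_eq_sum _ hfin, map_sum, map_sum] at h3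
    simp only [homogeneousComponent_of_mem (hwh _)] at h3
    rw [Finset.sum_ite_eq] at h3
    split_ifs at h3 with hmem
    · exact h3
    · have hmem' : ¬ (weightedHomogeneousComponent d e H ≠ 0) := fun hne =>
        hmem ((Set.Finite.mem_toFinset hfin).2 hne)
      rw [not_not.1 hmem', map_zero]
  rw [← sum_weightedHomogeneousComponent d H]
  simp [hzero]

/-- Chevalley's theorem, abstract form. -/
lemma cst_main
    (hom : ∀ (g : G) (d : ℕ) (p : MvPolynomial (Fin n) ℂ), p.IsHomogeneous d →
      (g • p).IsHomogeneous d)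
    (hgen : Subgroup.closure {s : G | ∃ L : MvPolynomial (Fin n) ℂ, L.IsHomogeneous 1 ∧
      ∀ p : MvPolynomial (Fin n) ℂ, L ∣ s • p - p} = ⊤) :
    ∃ σ : Fin n → MvPolynomial (Fin n) ℂ,
      (∃ d : Fin n → ℕ, ∀ i, (σ i).IsHomogeneous (d i)) ∧
      AlgebraicIndependent ℂ σ ∧
      FixedPoints.subalgebra ℂ (MvPolynomial (Fin n) ℂ) G = Algebra.adjoin ℂ (Set.range σ) := by
  classical
  have hex : ∃ k, ∃ F : Finset (MvPolynomial (Fin n) ℂ), F.card = k ∧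
      (F : Set (MvPolynomial (Fin n) ℂ)) ⊆ cstF n G ∧
      Ideal.span (cstF n G) = Ideal.span (F : Set (MvPolynomial (Fin n) ℂ)) := by
    obtain ⟨F, h1, h2⟩ := (Submodule.fg_span_iff_fg_span_finset_subset (cstF n G)).1
      (IsNoetherian.noetherian (Ideal.span (cstF n G)))
    exact ⟨_, F, rfl, h1, h2⟩
  obtain ⟨F, hFc, hFs, hFI⟩ := Nat.find_spec hex
  have hFmin : ∀ p ∈ F, p ∉ Ideal.span ((F.erase p : Finset _) : Set (MvPolynomial (Fin n) ℂ)) := by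
    intro p hp hmem
    refine Nat.find_min hex (m := (F.erase p).card) ?_ ⟨F.erase p, rfl, ?_, ?_⟩
    · rw [← hFc]; exact Finset.card_erase_lt_of_mem hp
    · exact subset_trans (by simp) hFs
    · rw [hFI]
      refine le_antisymm (Ideal.span_le.2 ?_) (Ideal.span_mono (by simp))
      intro x hx
      by_cases hxp : x = p
      · rw [hxp]; exact hmem
      · exact Ideal.subset_span (by simpa [hxp] using hx)
  let f : F → MvPolynomial (Fin n) ℂ := fun i => i
  have hf : ∀ i, ∀ g : G, g • f i = f i := fun i => (hFs i.2).1
  choose d hd hfh using fun i : F => (hFs i.2).2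
  have hrange : Set.range f = (F : Set (MvPolynomial (Fin n) ℂ)) := Subtype.range_coe
  have hI : Ideal.span (cstF n G) = Ideal.span (Set.range f) := by rw [hrange, hFI]
  have hmin : ∀ i, f i ∉ Ideal.span (f '' {i}ᶜ) := by
    intro i hi
    refine hFmin i i.2 (Ideal.span_mono ?_ hi)
    rintro _ ⟨j, hj, rfl⟩
    have hji : (j : MvPolynomial (Fin n) ℂ) ≠ i := fun h => hj (Subtype.ext h)
    simp [f, hji]
  have hind := cst_indep hom hgen f d hd hf hfh hI hmin
  -- generation
  have hgenh : ∀ e, ∀ p : MvPolynomial (Fin n) ℂ, p.IsHomogeneous e → (∀ g : G, g • p = p) →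
      p ∈ Algebra.adjoin ℂ (Set.range f) := by
    intro e
    induction e using Nat.strong_induction_on with
    | _ e ih =>
    intro p hp hinv
    rcases Nat.eq_zero_or_pos e with rfl | he
    · rw [← homogeneousComponent_eq_self hp, homogeneousComponent_zero]
      exact Subalgebra.algebraMap_mem _ _
    · have h1 : p ∈ Ideal.span (cstF n G) := Ideal.subset_span ⟨hinv, e, he, hp⟩
      rw [hI] at h1
      obtain ⟨c, hc⟩ := Ideal.mem_span_range_iff_exists_fun.1 h1
      have h2 : ∑ i, f i * cstRe G (c i) = p := by
        rw [← cstRe_self p hinv, ← hc, cstRe_sum]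
        refine Finset.sum_congr rfl fun i _ => ?_
        rw [mul_comm (c i), cstRe_mul _ _ (hf i)]
      rw [← homogeneousComponent_eq_self hp, ← h2, map_sum]
      refine sum_mem fun i _ => ?_
      rw [cst_comp_mul (hfh i)]
      split_ifs with hle
      · refine mul_mem (Algebra.subset_adjoin ⟨i, rfl⟩) (ih (e - d i) ?_ _
          (homogeneousComponent_isHomogeneous _ _) (cst_comp_inv hom _ (cstRe_inv _) _))
        have := hd i
        omega
      · exact zero_mem _
  have hadj : FixedPoints.subalgebra ℂ (MvPolynomial (Fin n) ℂ) G =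
      Algebra.adjoin ℂ (Set.range f) := by
    apply le_antisymm
    · intro p hp
      rw [← sum_homogeneousComponent p]
      exact sum_mem fun i _ => hgenh i _ (homogeneousComponent_isHomogeneous _ _)
        (cst_comp_inv hom p hp i)
    · refine Algebra.adjoin_le ?_
      rintro _ ⟨j, rfl⟩
      exact hf j
  -- counting
  have hinvt : Algebra.IsInvariant (Algebra.adjoin ℂ (Set.range f)) (MvPolynomial (Fin n) ℂ) G := by
    refine ⟨fun b hb => ?_⟩
    have : b ∈ Algebra.adjoin ℂ (Set.range f) := by rw [← hadj]; exact hb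
    exact ⟨⟨b, this⟩, rfl⟩
  have hint : Algebra.IsIntegral (Algebra.adjoin ℂ (Set.range f)) (MvPolynomial (Fin n) ℂ) :=
    Algebra.IsInvariant.isIntegral _ _ G
  have htb : IsTranscendenceBasis ℂ f :=
    hind.isTranscendenceBasis_iff_isAlgebraic.2 inferInstance
  have hcard := htb.cardinalMk_eq (IsTranscendenceBasis.mvPolynomial (Fin n) ℂ)
  obtain ⟨eq⟩ := Cardinal.eq.1 hcard
  refine ⟨f ∘ eq.symm, ⟨d ∘ eq.symm, fun i => hfh _⟩, hind.comp _ eq.symm.injective, ?_⟩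
  rw [hadj, Set.range_comp, eq.symm.surjective.range_eq, Set.image_univ]

end action

/-- `polySubst` as an algebra homomorphism. -/
noncomputable def cstHom (n : ℕ) (g : GL (Fin n) ℂ) :
    MvPolynomial (Fin n) ℂ →ₐ[ℂ] MvPolynomial (Fin n) ℂ :=
  MvPolynomial.aeval
    (fun i => ∑ j, MvPolynomial.C (((g⁻¹ : GL (Fin n) ℂ) : Matrix (Fin n) (Fin n) ℂ) i j)
      * MvPolynomial.X j)

lemma cstHom_X (n : ℕ) (g : GL (Fin n) ℂ) (i : Fin n) : cstHom n g (X i) =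
    ∑ j, C (((g⁻¹ : GL (Fin n) ℂ) : Matrix (Fin n) (Fin n) ℂ) i j) * X j := by
  simp [cstHom]

lemma cstHom_one (n : ℕ) : cstHom n 1 = AlgHom.id ℂ _ := by
  apply algHom_ext
  intro i
  rw [cstHom_X, inv_one, Units.val_one, Finset.sum_eq_single i]
  · simp
  · intro j _ hj
    simp [Matrix.one_apply, Ne.symm hj]
  · simp

lemma cstHom_mul (n : ℕ) (g h : GL (Fin n) ℂ) :
    cstHom n (g * h) = (cstHom n g).comp (cstHom n h) := by
  apply algHom_ext
  intro i
  rw [AlgHom.comp_apply, cstHom_X, cstHom_X, map_sum]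
  simp only [map_mul, cstHom_X, algHom_C, algebraMap_eq, mul_inv_rev, Units.val_mul,
    Matrix.mul_apply, map_sum, Finset.sum_mul, Finset.mul_sum]
  rw [Finset.sum_comm]
  refine Finset.sum_congr rfl fun j _ => Finset.sum_congr rfl fun k _ => ?_
  ring

lemma cstHom_homog (n : ℕ) (g : GL (Fin n) ℂ) (d : ℕ) (p : MvPolynomial (Fin n) ℂ)
    (hp : p.IsHomogeneous d) : (cstHom n g p).IsHomogeneous d := by
  have h := hp.aeval (n := 1)
    (fun i => ∑ j, C (((g⁻¹ : GL (Fin n) ℂ) : Matrix (Fin n) (Fin n) ℂ) i j) * X j) ?_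
  · rwa [one_mul] at h
  · intro i
    refine IsHomogeneous.sum _ _ _ fun j _ => ?_
    have := (isHomogeneous_C (Fin n) (((g⁻¹ : GL (Fin n) ℂ) : Matrix (Fin n) (Fin n) ℂ) i j)).mul
      (isHomogeneous_X ℂ j)
    rwa [zero_add] at this

lemma cst_rank (n : ℕ) (g : GL (Fin n) ℂ) (hg : IsPseudoReflection n g) :
    ∃ a l : Fin n → ℂ, ((g⁻¹ : GL (Fin n) ℂ) : Matrix (Fin n) (Fin n) ℂ) =
      1 + Matrix.vecMulVec a l := by
  have h1 := LinearMap.finrank_range_add_finrank_ker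
    (Matrix.toLin' ((g : Matrix (Fin n) (Fin n) ℂ)) - LinearMap.id)
  rw [hg.2, Module.finrank_fin_fun] at h1
  have h2 : finrank ℂ (LinearMap.range
    (Matrix.toLin' ((g : Matrix (Fin n) (Fin n) ℂ)) - LinearMap.id)) ≤ 1 := by omega
  obtain ⟨v, hv⟩ := finrank_le_one_iff.1 h2
  choose l hl using fun j => hv ⟨_, LinearMap.mem_range_self _ (Pi.single j 1)⟩
  have h3 : (g : Matrix (Fin n) (Fin n) ℂ) = 1 + Matrix.vecMulVec (v : Fin n → ℂ) l := by
    ext i j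
    have h4 := congrFun (congrArg Subtype.val (hl j)) i
    simp [Matrix.one_apply, Pi.single_apply] at h4
    rw [Matrix.add_apply, Matrix.vecMulVec_apply, Matrix.one_apply, mul_comm, h4]
    ring
  refine ⟨-(((g⁻¹ : GL (Fin n) ℂ) : Matrix (Fin n) (Fin n) ℂ).mulVec v), l, ?_⟩
  have h5 : ((g⁻¹ : GL (Fin n) ℂ) : Matrix (Fin n) (Fin n) ℂ) * (g : Matrix (Fin n) (Fin n) ℂ) = 1 := by
    rw [← Units.val_mul, inv_mul_cancel, Units.val_one]
  rw [Matrix.neg_vecMulVec, ← Matrix.mul_vecMulVec]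
  replace h3 := sub_eq_iff_eq_add'.2 h3
  rw [← h3, mul_sub, h5, mul_one]
  abel

lemma cst_refl (n : ℕ) (g : GL (Fin n) ℂ) (hg : IsPseudoReflection n g) :
    ∃ L : MvPolynomial (Fin n) ℂ, L.IsHomogeneous 1 ∧
      ∀ p : MvPolynomial (Fin n) ℂ, L ∣ cstHom n g p - p := by
  obtain ⟨a, l, h⟩ := cst_rank n g hg
  refine ⟨∑ j, C (l j) * X j, ?_, fun p => ?_⟩
  · refine IsHomogeneous.sum _ _ _ fun j _ => ?_
    have := (isHomogeneous_C (Fin n) (l j)).mul (isHomogeneous_X ℂ j)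
    rwa [zero_add] at this
  · have hX : ∀ i, cstHom n g (X i) = X i + C (a i) * ∑ j, C (l j) * X j := by
      intro i
      rw [cstHom_X, h]
      simp only [Matrix.add_apply, Matrix.vecMulVec_apply, C_add, add_mul, Finset.sum_add_distrib,
        C_mul, Finset.mul_sum, mul_assoc]
      congr 1
      rw [Finset.sum_eq_single i]
      · simp
      · intro j _ hj
        simp [Matrix.one_apply, Ne.symm hj]
      · simp
    induction p using MvPolynomial.induction_on with
    | C c => simp [algHom_C, algebraMap_eq]
    | add p q hp hq =>
      rw [map_add, add_sub_add_comm]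
      exact dvd_add hp hq
    | mul_X p i hp =>
      have : cstHom n g (p * X i) - p * X i = (cstHom n g p - p) * X i +
          (∑ j, C (l j) * X j) * (cstHom n g p * C (a i)) := by
        rw [map_mul, hX]; ring
      rw [this]
      exact dvd_add (Dvd.dvd.mul_right hp _) (dvd_mul_right _ _)

/-- The action of a subgroup of `GL` on polynomials. -/
noncomputable abbrev cstAct (n : ℕ) (W : Subgroup (GL (Fin n) ℂ)) :
    MulSemiringAction W (MvPolynomial (Fin n) ℂ) where
  smul g p := cstHom n g p
  one_smul p := by
    change cstHom n ((1 : W) : GL (Fin n) ℂ) p = p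
    rw [Subgroup.coe_one, cstHom_one]; rfl
  mul_smul g h p := by
    change cstHom n ((g * h : W) : GL (Fin n) ℂ) p = cstHom n g (cstHom n h p)
    rw [Subgroup.coe_mul, cstHom_mul]; rfl
  smul_zero g := map_zero (cstHom n g)
  smul_add g := map_add (cstHom n g)
  smul_one g := map_one (cstHom n g)
  smul_mul g := map_mul (cstHom n g)

end cst

/-- The invariant ring of a finite pseudo-reflection group is a
polynomial algebra on `n` algebraically independent homogeneous generators. -/
theorem statement10 (n : ℕ) (W : Subgroup (GL (Fin n) ℂ))
    (hfin : (W : Set (GL (Fin n) ℂ)).Finite)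
    (hgen : W = Subgroup.closure {g : GL (Fin n) ℂ | g ∈ W ∧ IsPseudoReflection n g}) :
    ∃ σ : Fin n → MvPolynomial (Fin n) ℂ,
      (∃ d : Fin n → ℕ, ∀ i, (σ i).IsHomogeneous (d i)) ∧
      AlgebraicIndependent ℂ σ ∧
      {p : MvPolynomial (Fin n) ℂ | ∀ g ∈ W, polySubst n g p = p}
        = (Algebra.adjoin ℂ (Set.range σ) : Set (MvPolynomial (Fin n) ℂ)) := by
  let _ : MulSemiringAction W (MvPolynomial (Fin n) ℂ) := cstAct n W
  have hsm : ∀ (g : W) (p : MvPolynomial (Fin n) ℂ), g • p = cstHom n g p := fun _ _ => rfl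
  have : SMulCommClass W ℂ (MvPolynomial (Fin n) ℂ) :=
    ⟨fun g c p => map_smul (cstHom n g) c p⟩
  have : Finite W := hfin
  have : Fintype W := Fintype.ofFinite W
  have hgen' : Subgroup.closure {s : W | ∃ L : MvPolynomial (Fin n) ℂ, L.IsHomogeneous 1 ∧
      ∀ p : MvPolynomial (Fin n) ℂ, L ∣ s • p - p} = ⊤ := by
    rw [eq_top_iff]
    rintro ⟨g, hg⟩ -
    have hg' := hg
    rw [hgen] at hg'
    have key : ∀ (x : GL (Fin n) ℂ),
        x ∈ Subgroup.closure {g : GL (Fin n) ℂ | g ∈ W ∧ IsPseudoReflection n g} →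
        x ∈ (Subgroup.closure {s : W | ∃ L : MvPolynomial (Fin n) ℂ, L.IsHomogeneous 1 ∧
          ∀ p : MvPolynomial (Fin n) ℂ, L ∣ s • p - p}).map W.subtype := by
      intro x hx
      refine (Subgroup.closure_le _).2 ?_ hx
      rintro s ⟨hsW, hs⟩
      exact ⟨⟨s, hsW⟩, Subgroup.subset_closure (cst_refl n s hs), rfl⟩
    obtain ⟨y, hy, hyg⟩ := key g hg'
    have : y = ⟨g, hg⟩ := Subtype.ext hyg
    rwa [← this]
  obtain ⟨σ, h1, h2, h3⟩ := cst_main (n := n) (G := W)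
    (fun g d p hp => cstHom_homog n g d p hp) hgen'
  refine ⟨σ, h1, h2, ?_⟩
  rw [← h3]
  ext p
  constructor
  · intro hp g
    exact hp g g.2
  · intro hp g hg
    exact hp ⟨g, hg⟩
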